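/- (Linear convergence under a Bregman error bound.) Under the standing assumption with strict inequality αϱγ > 1, assume additionally: ψ is ς-strongly convex (ς > 0); ∇ψ and ∇φ are Lipschitz continuous with moduli L_ψ and L_φ; the solution set U* of saddle points is nonempty; and there is η > 0 such that for every iterate u^{k+1} = (x^{k+1}, y^{k+1}) of SPIDA, dist_B(u^{k+1}, U*)² ≤ η² · inf over (ξ, ζ) ∈ ∂f(x^{k+1}) × ∂g(y^{k+1}) of (‖x^{k+1} − Π_X[x^{k+1} − (ξ + Aᵀy^{k+1})]‖² + ‖y^{k+1} − Π_Y[y^{k+1} − (ζ − Ax^{k+1})]‖²), where dist_B(u, U*)² = min{ γ B_φ(y*, y) + μ B_ψ(x*, x) : (x*, y*) ∈ U* }. Define ϑ = min{ ϱ/(4γη²L_φ²), (γαϱ − 1)/(4αη²(‖AAᵀ‖ + γ²L_φ²)), ς/(4μη²L_ψ²) } > 0. Then for every k: (1 + ϑ) · dist_B(u^{k+1}, U*)² ≤ dist_B(u^k, U*)². -/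

import Mathlib

noncomputable section
open scoped RealInnerProductSpace
open Filter

abbrev Euc (d : ℕ) : Type := EuclideanSpace ℝ (Fin d)

/-- Bregman distance associated with kernel `φ` whose gradient map is `φ'`. -/
def Breg {d : ℕ} (φ : Euc d → ℝ) (φ' : Euc d → Euc d) (x y : Euc d) : ℝ :=
  φ x - φ y - ⟪φ' y, x - y⟫

/-- Convex subdifferential. -/
def subdiff {d : ℕ} (h : Euc d → ℝ) (x : Euc d) : Set (Euc d) :=
  {ξ | ∀ z, h x + ⟪z - x, ξ⟫ ≤ h z}

open Classical in
/-- Euclidean (metric) projection onto a set (the nearest point, when it exists). -/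
def projOn {d : ℕ} (X : Set (Euc d)) (z : Euc d) : Euc d :=
  if h : ∃ p ∈ X, ∀ w ∈ X, ‖z - p‖ ≤ ‖z - w‖ then h.choose else z

/-- The convex-concave Lagrangian `L(x,y) = f(x) + ⟨Ax, y⟩ − g(y)`. -/
def Lag {n m : ℕ} (f : Euc n → ℝ) (g : Euc m → ℝ) (A : Euc n →L[ℝ] Euc m)
    (x : Euc n) (y : Euc m) : ℝ := f x + ⟪A x, y⟫ - g y


lemma dir_limit {d : ℕ} (k : Euc d → ℝ) (k' x v : Euc d) (c m : ℝ)
    (hk : HasGradientAt k k' x)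
    (h : ∀ t : ℝ, 0 < t → t ≤ 1 → t * m ≤ c * (k (x + t • v) - k x)) :
    m ≤ c * ⟪k', v⟫ := by
  have h1 : HasDerivAt (fun t : ℝ => k (x + t • v)) ⟪k', v⟫ 0 := by
    have h2 : HasDerivAt (fun t : ℝ => x + t • v) v 0 := by
      simpa using ((hasDerivAt_id (0:ℝ)).smul_const v).const_add x
    have h3 : HasFDerivAt k (InnerProductSpace.toDual ℝ (Euc d) k') (x + (0:ℝ) • v) := by
      simpa using hk.hasFDerivAt
    have h4 := h3.comp_hasDerivAt (0:ℝ) h2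
    rw [InnerProductSpace.toDual_apply_apply] at h4
    exact h4
  have h5 := (h1.tendsto_slope_zero_right).const_mul c
  refine ge_of_tendsto h5 ?_
  have : Set.Ioc (0:ℝ) 1 ∈ nhdsWithin (0:ℝ) (Set.Ioi 0) := Ioc_mem_nhdsGT one_pos
  filter_upwards [this] with t ht
  have h6 := h t ht.1 ht.2
  simp only [zero_add, zero_smul, add_zero, smul_eq_mul]
  rw [show c * (t⁻¹ * (k (x + t • v) - k x)) = t⁻¹ * (c * (k (x + t • v) - k x)) by ring]
  rw [le_inv_mul_iff₀ ht.1]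
  exact h6

lemma conv_seg {d : ℕ} (k : Euc d → ℝ) (hk : ConvexOn ℝ Set.univ k) (x z : Euc d) (t : ℝ)
    (h0 : 0 < t) (h1 : t ≤ 1) : k (x + t • (z - x)) - k x ≤ t * (k z - k x) := by
  have := hk.2 (Set.mem_univ x) (Set.mem_univ z) (by linarith : 0 ≤ 1 - t) h0.le (by ring)
  have e : (1 - t) • x + t • z = x + t • (z - x) := by module
  rw [e] at this
  simp only [smul_eq_mul] at this
  linarith

lemma grad_ineq {d : ℕ} (k : Euc d → ℝ) (k' x z : Euc d) (hk : ConvexOn ℝ Set.univ k)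
    (hg : HasGradientAt k k' x) : k x + ⟪k', z - x⟫ ≤ k z := by
  have := dir_limit k k' x (z - x) (-1) (-(k z - k x)) hg (fun t h0 h1 => by
    have := conv_seg k hk x z t h0 h1
    linarith)
  linarith

lemma hasGrad_sq {d : ℕ} (c : ℝ) (x : Euc d) :
    HasGradientAt (fun z : Euc d => c / 2 * ‖z‖ ^ 2) (c • x) x := by
  rw [hasGradientAt_iff_hasFDerivAt]
  have := ((hasStrictFDerivAt_norm_sq x).hasFDerivAt).const_mul (c/2)
  refine this.congr_fderiv ?_
  ext v
  simp
  ring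

lemma breg_strong {d : ℕ} (a c : ℝ) (k : Euc d → ℝ) (k' : Euc d → Euc d)
    (hg : ∀ z, HasGradientAt k (k' z) z)
    (hk : ConvexOn ℝ Set.univ (fun z => a * k z - c / 2 * ‖z‖ ^ 2)) (z x : Euc d) :
    c / 2 * ‖z - x‖ ^ 2 ≤ a * Breg k k' z x := by
  have h1 : HasGradientAt (fun z => a * k z - c / 2 * ‖z‖ ^ 2) (a • k' x - c • x) x := by
    rw [hasGradientAt_iff_hasFDerivAt]
    have h2 := ((hg x).hasFDerivAt.const_mul a).sub (hasGrad_sq c x).hasFDerivAt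
    refine h2.congr_fderiv ?_
    simp
  have h3 := grad_ineq _ _ x z hk h1
  simp only [inner_sub_left, inner_sub_right, real_inner_smul_left, real_inner_self_eq_norm_sq] at h3
  unfold Breg
  rw [norm_sub_sq_real, real_inner_comm, inner_sub_right]
  nlinarith

lemma breg_strong1 {d : ℕ} (c : ℝ) (k : Euc d → ℝ) (k' : Euc d → Euc d)
    (hg : ∀ z, HasGradientAt k (k' z) z)
    (hk : ConvexOn ℝ Set.univ (fun z => k z - c / 2 * ‖z‖ ^ 2)) (z x : Euc d) :
    c / 2 * ‖z - x‖ ^ 2 ≤ Breg k k' z x := by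
  have := breg_strong 1 c k k' hg (by simpa using hk) z x
  simpa using this

lemma sandwich {d : ℕ} (H : Euc d → ℝ) (hH : ConvexOn ℝ Set.univ H) (C : Set (Euc d))
    (hC : Convex ℝ C) (x : Euc d) (hx : x ∈ C) (hx0 : H x = 0) (hpos : ∀ z ∈ C, 0 ≤ H z) :
    ∃ ξ : Euc d, (∀ z, ⟪ξ, z - x⟫ ≤ H z) ∧ ∀ z ∈ C, 0 ≤ ⟪ξ, z - x⟫ := by
  have hcont : Continuous H := continuousOn_univ.1 (hH.continuousOn isOpen_univ)
  have hopen : IsOpen {p : Euc d × ℝ | H p.1 < p.2} :=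
    isOpen_lt (hcont.comp continuous_fst) continuous_snd
  have hconv : Convex ℝ {p : Euc d × ℝ | H p.1 < p.2} := by
    simpa using hH.convex_strict_epigraph
  have hdisj : Disjoint {p : Euc d × ℝ | H p.1 < p.2} (C ×ˢ {(0:ℝ)}) := by
    rw [Set.disjoint_left]
    rintro ⟨z, t⟩ h1 ⟨h2, h3⟩
    simp only [Set.mem_ofPred_eq, Set.mem_singleton_iff] at h1 h2 h3
    have := hpos z h2
    linarith
  obtain ⟨F, u, hF1, hF2⟩ := geometric_hahn_banach_open hconv hopen
    (hC.prod (convex_singleton (0:ℝ))) hdisj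
  set l : Euc d →L[ℝ] ℝ := F.comp (ContinuousLinearMap.inl ℝ (Euc d) ℝ) with hl
  set s : ℝ := F (0, 1) with hs
  have hdec : ∀ z t, F (z, t) = l z + t * s := by
    intro z t
    have : ((z, t) : Euc d × ℝ) = (z, 0) + t • ((0 : Euc d), (1:ℝ)) := by ext <;> simp
    rw [this, map_add, map_smul]
    simp [hl, hs]
  have hA : ∀ z t, H z < t → l z + t * s < u := fun z t h => by
    rw [← hdec]; exact hF1 _ h
  have hB : ∀ z ∈ C, u ≤ l z := fun z h => by
    have := hF2 (z, 0) ⟨h, rfl⟩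
    rw [hdec] at this; linarith
  have hsneg : s < 0 := by
    have h1 := hA x 1 (by rw [hx0]; norm_num)
    have h2 := hB x hx
    linarith
  have hA' : ∀ z, l z + H z * s ≤ u := by
    intro z
    refine le_of_forall_pos_le_add fun ε hε => ?_
    have := hA z (H z + ε / (-s)) (by have := div_pos hε (neg_pos.2 hsneg); linarith)
    have e : ε / (-s) * s = -ε := by
      have : s ≠ 0 := hsneg.ne
      field_simp
    rw [add_mul, e] at this
    linarith
  have hu : u = l x := by
    apply le_antisymm (hB x hx)
    have := hA' x
    rw [hx0] at this; linarith
  refine ⟨(InnerProductSpace.toDual ℝ (Euc d)).symm ((-s)⁻¹ • l), ?_, ?_⟩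
  · intro z
    rw [InnerProductSpace.toDual_symm_apply]
    rw [smul_apply, smul_eq_mul, map_sub]
    rw [inv_mul_le_iff₀ (neg_pos.2 hsneg)]
    have := hA' z
    linarith
  · intro z hz
    rw [InnerProductSpace.toDual_symm_apply]
    rw [smul_apply, smul_eq_mul, map_sub]
    have := hB z hz
    exact mul_nonneg (inv_nonneg.2 (neg_pos.2 hsneg).le) (by linarith)

lemma opt_cond {d : ℕ} (h : Euc d → ℝ) (hh : ConvexOn ℝ Set.univ h) (C : Set (Euc d))
    (hC : Convex ℝ C) (k : Euc d → ℝ) (k' : Euc d → Euc d)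
    (hg : ∀ z, HasGradientAt k (k' z) z) (b x0 x : Euc d) (c : ℝ) (hx : x ∈ C)
    (hmin : ∀ z ∈ C, h x + ⟪b, x⟫ + c * Breg k k' x x0 ≤ h z + ⟪b, z⟫ + c * Breg k k' z x0) :
    ∃ ξ ∈ subdiff h x, ∀ z ∈ C, 0 ≤ ⟪ξ + (b + c • (k' x - k' x0)), z - x⟫ := by
  set q := b + c • (k' x - k' x0) with hq
  have h1 : ∀ z ∈ C, 0 ≤ h z - h x + ⟪q, z - x⟫ := by
    intro z hz
    have := dir_limit k (k' x) x (z - x) c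
      (c * ⟪k' x0, z - x⟫ - ⟪b, z - x⟫ - (h z - h x)) (hg x) (fun t h0 h1 => by
        have hm : x + t • (z - x) ∈ C := hC.add_smul_sub_mem hx hz ⟨h0.le, h1⟩
        have h2 := hmin _ hm
        have h3 := conv_seg h hh x z t h0 h1
        unfold Breg at h2
        have e1 : ⟪b, x + t • (z - x)⟫ = ⟪b, x⟫ + t * ⟪b, z - x⟫ := by
          rw [inner_add_right, real_inner_smul_right]
        have e2 : ⟪k' x0, x + t • (z - x) - x0⟫ = ⟪k' x0, x - x0⟫ + t * ⟪k' x0, z - x⟫ := by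
          rw [show x + t • (z - x) - x0 = (x - x0) + t • (z - x) by abel,
            inner_add_right, real_inner_smul_right]
        rw [e1, e2] at h2
        linarith)
    rw [hq, inner_add_left, real_inner_smul_left, inner_sub_left]
    linarith
  have hHc : ConvexOn ℝ Set.univ (fun z => h z + (⟪q, z⟫ + (- h x - ⟪q, x⟫))) := by
    refine hh.add ?_
    refine ConvexOn.add_const ?_ _
    exact ((innerSL ℝ q).toLinearMap).convexOn convex_univ
  obtain ⟨ξ, h2, h3⟩ := sandwich _ hHc C hC x hx (by ring) (fun z hz => by
    have := h1 z hz
    rw [inner_sub_right] at this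
    linarith)
  refine ⟨ξ - q, ?_, ?_⟩
  · intro z
    have := h2 z
    rw [real_inner_comm, inner_sub_left, inner_sub_right q]
    linarith
  · intro z hz
    simpa using h3 z hz

lemma three_pt {d : ℕ} (h : Euc d → ℝ) (k : Euc d → ℝ) (k' : Euc d → Euc d)
    (b x0 x ξ z : Euc d) (c : ℝ) (hξ : ξ ∈ subdiff h x)
    (hz : 0 ≤ ⟪ξ + (b + c • (k' x - k' x0)), z - x⟫) :
    h x + ⟪b, x⟫ + c * (Breg k k' x x0 + Breg k k' z x) ≤ h z + ⟪b, z⟫ + c * Breg k k' z x0 := by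
  have h1 := hξ z
  rw [real_inner_comm] at h1
  rw [inner_add_left, inner_add_left, real_inner_smul_left] at hz
  have e : ⟪k' x - k' x0, z - x⟫ = Breg k k' z x0 - Breg k k' z x - Breg k k' x x0 := by
    unfold Breg
    simp only [inner_sub_left, inner_sub_right]
    ring
  rw [e, inner_sub_right b] at hz
  linarith

lemma proj_res {d : ℕ} (C : Set (Euc d)) (hne : C.Nonempty) (hcl : IsClosed C)
    (hC : Convex ℝ C) (x w w' : Euc d) (hx : x ∈ C) (hw : ∀ z ∈ C, 0 ≤ ⟪w', z - x⟫) :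
    ‖x - projOn C (x - w)‖ ≤ ‖w - w'‖ := by
  have hex : ∃ p ∈ C, ∀ v ∈ C, ‖(x - w) - p‖ ≤ ‖(x - w) - v‖ := by
    obtain ⟨p, hp, hpe⟩ := exists_norm_eq_iInf_of_complete_convex hne hcl.isComplete hC (x - w)
    refine ⟨p, hp, fun v hv => ?_⟩
    rw [hpe]
    exact ciInf_le ⟨0, by rintro _ ⟨i, rfl⟩; exact norm_nonneg _⟩ (⟨v, hv⟩ : C)
  have hdef : projOn C (x - w) = hex.choose := by
    unfold projOn; rw [dif_pos hex]
  obtain ⟨hp, hpmin⟩ := hex.choose_spec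
  rw [← hdef] at hp hpmin
  set p := projOn C (x - w) with hpdef
  have : Nonempty C := hne.to_subtype
  have hinf : ‖(x - w) - p‖ = ⨅ v : C, ‖(x - w) - v‖ :=
    le_antisymm (le_ciInf fun v => hpmin v v.2)
      (ciInf_le ⟨0, by rintro _ ⟨i, rfl⟩; exact norm_nonneg _⟩ (⟨p, hp⟩ : C))
  have h1 := (norm_eq_iInf_iff_real_inner_le_zero hC hp).1 hinf x hx
  have h2 := hw p hp
  have h3 : ‖x - p‖ ^ 2 ≤ ⟪w - w', x - p⟫ := by
    rw [show x - w - p = (x - p) - w by abel, inner_sub_left, real_inner_self_eq_norm_sq] at h1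
    rw [← neg_sub x p, inner_neg_right] at h2
    rw [inner_sub_left]
    linarith
  have h4 := real_inner_le_norm (w - w') (x - p)
  rcases (norm_nonneg (x - p)).eq_or_lt with h | h
  · rw [← h]; exact norm_nonneg _
  · nlinarith

set_option maxHeartbeats 4000000 in
/-- Q-linear convergence of SPIDA under a Bregman error bound. -/
theorem spida_linear_convergence {n m : ℕ}
    (X : Set (Euc n)) (Y : Set (Euc m))
    (hXne : X.Nonempty) (hXcl : IsClosed X) (hXcv : Convex ℝ X)
    (hYne : Y.Nonempty) (hYcl : IsClosed Y) (hYcv : Convex ℝ Y)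
    (f : Euc n → ℝ) (g : Euc m → ℝ)
    (hf : ConvexOn ℝ Set.univ f) (hflsc : LowerSemicontinuous f)
    (hg : ConvexOn ℝ Set.univ g) (hglsc : LowerSemicontinuous g)
    (A : Euc n →L[ℝ] Euc m)
    (γ μ : ℝ) (hγ : 0 < γ) (hμ : 0 < μ)
    (φ : Euc m → ℝ) (φ' : Euc m → Euc m)
    (hφg : ∀ z, HasGradientAt φ (φ' z) z) (hφcv : ConvexOn ℝ Set.univ φ)
    (ψ : Euc n → ℝ) (ψ' : Euc n → Euc n)
    (hψg : ∀ z, HasGradientAt ψ (ψ' z) z) (hψcv : ConvexOn ℝ Set.univ ψ)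
    (x : ℕ → Euc n) (yt y : ℕ → Euc m)
    (hx0 : x 0 ∈ X) (hy0 : y 0 ∈ Y)
    (hytmem : ∀ k, yt (k + 1) ∈ Y)
    (hytmax : ∀ k, ∀ z ∈ Y, -g z + ⟪A (x k), z⟫ - γ * Breg φ φ' z (y k) ≤
      -g (yt (k + 1)) + ⟪A (x k), yt (k + 1)⟫ - γ * Breg φ φ' (yt (k + 1)) (y k))
    (hxmem : ∀ k, x (k + 1) ∈ X)
    (hxmin : ∀ k, ∀ z ∈ X,
      f (x (k + 1)) + ⟪A (x (k + 1)), yt (k + 1)⟫ + μ * Breg ψ ψ' (x (k + 1)) (x k) ≤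
        f z + ⟪A z, yt (k + 1)⟫ + μ * Breg ψ ψ' z (x k))
    (hymem : ∀ k, y (k + 1) ∈ Y)
    (hymax : ∀ k, ∀ z ∈ Y, -g z + ⟪A (x (k + 1)), z⟫ - γ * Breg φ φ' z (y k) ≤
      -g (y (k + 1)) + ⟪A (x (k + 1)), y (k + 1)⟫ - γ * Breg φ φ' (y (k + 1)) (y k))
    (ϱ α : ℝ) (hϱ : 0 < ϱ) (hα : 0 < α)
    (hφsc : ConvexOn ℝ Set.univ (fun z => φ z - ϱ / 2 * ‖z‖ ^ 2))
    (hαϱγ : 1 ≤ α * ϱ * γ)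
    (φn : Euc n → ℝ) (φn' : Euc n → Euc n)
    (hφng : ∀ z, HasGradientAt φn (φn' z) z)
    (hφnsc : ConvexOn ℝ Set.univ (fun z => φn z - ϱ / 2 * ‖z‖ ^ 2))
    (L0 : ℝ) (hL0pos : 0 < L0)
    (hL0le : L0 ≤ ϱ * μ / (α * ‖(ContinuousLinearMap.adjoint A).comp A‖))
    (hLψφ : ConvexOn ℝ Set.univ (fun z => L0 * ψ z - φn z))
    (hstrict : 1 < α * ϱ * γ)
    (ς : ℝ) (hς : 0 < ς)
    (hψsc : ConvexOn ℝ Set.univ (fun z => ψ z - ς / 2 * ‖z‖ ^ 2))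
    (Lψ Lφ : NNReal) (hLψpos : 0 < (Lψ : ℝ)) (hLφpos : 0 < (Lφ : ℝ))
    (hψlip : LipschitzWith Lψ ψ') (hφlip : LipschitzWith Lφ φ')
    (Ustar : Set (Euc n × Euc m))
    (hUstar : Ustar = {p : Euc n × Euc m | p.1 ∈ X ∧ p.2 ∈ Y ∧
      ∀ xx ∈ X, ∀ yy ∈ Y,
        Lag f g A p.1 yy ≤ Lag f g A p.1 p.2 ∧ Lag f g A p.1 p.2 ≤ Lag f g A xx p.2})
    (hUne : Ustar.Nonempty)
    (dB : Euc n × Euc m → ℝ)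
    (hdB : ∀ u : Euc n × Euc m,
      dB u = ⨅ p : Ustar, (γ * Breg φ φ' (p : Euc n × Euc m).2 u.2
        + μ * Breg ψ ψ' (p : Euc n × Euc m).1 u.1))
    (η : ℝ) (hη : 0 < η)
    (herr : ∀ k : ℕ, ∀ ξ ∈ subdiff f (x (k + 1)), ∀ ζ ∈ subdiff g (y (k + 1)),
      dB (x (k + 1), y (k + 1)) ≤ η ^ 2 *
        (‖x (k + 1) - projOn X (x (k + 1)
            - (ξ + ContinuousLinearMap.adjoint A (y (k + 1))))‖ ^ 2
          + ‖y (k + 1) - projOn Y (y (k + 1) - (ζ - A (x (k + 1))))‖ ^ 2))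
    (ϑ : ℝ)
    (hϑ : ϑ = min (min (ϱ / (4 * γ * η ^ 2 * (Lφ : ℝ) ^ 2))
        ((γ * α * ϱ - 1) / (4 * α * η ^ 2 *
          (‖A.comp (ContinuousLinearMap.adjoint A)‖ + γ ^ 2 * (Lφ : ℝ) ^ 2))))
      (ς / (4 * μ * η ^ 2 * (Lψ : ℝ) ^ 2))) :
    0 < ϑ ∧ ∀ k : ℕ, (1 + ϑ) * dB (x (k + 1), y (k + 1)) ≤ dB (x k, y k) := by
  set At := ContinuousLinearMap.adjoint A with hAt
  have hAip : ∀ a b, ⟪A a, b⟫ = ⟪At b, a⟫ := fun a b => by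
    rw [hAt, ContinuousLinearMap.adjoint_inner_left, real_inner_comm]
  have hnAA : ‖At.comp A‖ = ‖A‖ * ‖A‖ := ContinuousLinearMap.norm_adjoint_comp_self A
  have hApos : 0 < ‖A‖ := by
    rcases (norm_nonneg A).eq_or_lt with h | h
    · rw [hnAA, ← h] at hL0le
      simp at hL0le
      linarith
    · exact h
  have hL0' : L0 * (α * (‖A‖ * ‖A‖)) ≤ ϱ * μ := by
    rw [hnAA] at hL0le
    exact (le_div_iff₀ (by positivity)).1 hL0le
  -- Bregman lower bounds
  have hBφ : ∀ z w, ϱ / 2 * ‖z - w‖ ^ 2 ≤ Breg φ φ' z w := breg_strong1 ϱ φ φ' hφg hφsc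
  have hBψ : ∀ z w, ς / 2 * ‖z - w‖ ^ 2 ≤ Breg ψ ψ' z w := breg_strong1 ς ψ ψ' hψg hψsc
  have hBψL : ∀ z w, ϱ / 2 * ‖z - w‖ ^ 2 ≤ L0 * Breg ψ ψ' z w := by
    apply breg_strong L0 ϱ ψ ψ' hψg
    have := hLψφ.add hφnsc
    refine this.congr ?_
    intro z _
    simp
  have hBψA : ∀ z w, α / 2 * ‖A (z - w)‖ ^ 2 ≤ μ * Breg ψ ψ' z w := by
    intro z w
    have h1 := hBψL z w
    have h2 : ‖A (z - w)‖ ≤ ‖A‖ * ‖z - w‖ := A.le_opNorm _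
    have h3 : ‖A (z - w)‖ ^ 2 ≤ (‖A‖ * ‖A‖) * ‖z - w‖ ^ 2 := by
      calc _ ≤ (‖A‖ * ‖z - w‖) ^ 2 := by gcongr
        _ = _ := by ring
    have h4 : L0 * (α / 2 * ‖A (z - w)‖ ^ 2) ≤ L0 * (μ * Breg ψ ψ' z w) := by
      calc _ ≤ L0 * (α / 2 * ((‖A‖ * ‖A‖) * ‖z - w‖ ^ 2)) := by gcongr
        _ = (L0 * (α * (‖A‖ * ‖A‖))) * (‖z - w‖ ^ 2 / 2) := by ring
        _ ≤ (ϱ * μ) * (‖z - w‖ ^ 2 / 2) := by gcongr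
        _ = μ * (ϱ / 2 * ‖z - w‖ ^ 2) := by ring
        _ ≤ μ * (L0 * Breg ψ ψ' z w) := by gcongr
        _ = _ := by ring
    exact le_of_mul_le_mul_left h4 hL0pos
  have hLipψ : ∀ z w, ‖ψ' z - ψ' w‖ ≤ Lψ * ‖z - w‖ := fun z w => by
    simpa [dist_eq_norm] using hψlip.dist_le_mul z w
  have hLipφ : ∀ z w, ‖φ' z - φ' w‖ ≤ Lφ * ‖z - w‖ := fun z w => by
    simpa [dist_eq_norm] using hφlip.dist_le_mul z w
  have hsym : ∀ z w, Breg ψ ψ' z w + Breg ψ ψ' w z = ⟪ψ' z - ψ' w, z - w⟫ := fun z w => by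
    unfold Breg
    simp only [inner_sub_left, inner_sub_right]
    ring
  have hup : ∀ z w, ⟪ψ' z - ψ' w, z - w⟫ ≤ Lψ * ‖z - w‖ ^ 2 := fun z w => by
    calc _ ≤ ‖ψ' z - ψ' w‖ * ‖z - w‖ := real_inner_le_norm _ _
      _ ≤ (Lψ * ‖z - w‖) * ‖z - w‖ := by gcongr; exact hLipψ z w
      _ = _ := by ring
  have hBup : ∀ z w, Breg ψ ψ' z w ≤ Lψ * ‖z - w‖ ^ 2 := fun z w => by
    have h1 := hsym z w
    have h2 := hup z w
    have h3 := hBψ w z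
    have : 0 ≤ ς / 2 * ‖w - z‖ ^ 2 := by positivity
    linarith
  have hςL : ς ≤ Lψ := by
    obtain ⟨v, hv⟩ : ∃ v, A v ≠ 0 := by
      by_contra hcon
      push Not at hcon
      have : A = 0 := by ext1 v; simpa using hcon v
      rw [this] at hApos; simp at hApos
    have hv0 : v ≠ 0 := fun h => hv (by rw [h]; simp)
    have h1 := hsym v 0
    have h2 := hup v 0
    have h3 := hBψ v 0
    have h4 := hBψ 0 v
    rw [norm_sub_rev 0 v] at h4
    have h5 : 0 < ‖v - 0‖ ^ 2 := by rw [sub_zero]; positivity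
    have h6 : ς * ‖v - 0‖ ^ 2 ≤ Lψ * ‖v - 0‖ ^ 2 := by linarith
    exact le_of_mul_le_mul_right h6 h5
  -- theta
  have hϑpos : 0 < ϑ := by
    rw [hϑ]
    have : 0 < γ * α * ϱ - 1 := by nlinarith
    refine lt_min (lt_min ?_ ?_) ?_
    · positivity
    · refine div_pos this ?_
      have : 0 ≤ ‖A.comp At‖ := norm_nonneg _
      positivity
    · positivity
  set T := ϑ * η ^ 2 with hT
  have hTpos : 0 < T := by positivity
  have hT1 : 2 * T * (γ ^ 2 * (Lφ:ℝ) ^ 2) ≤ γ * ϱ / 2 := by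
    have h : ϑ ≤ ϱ / (4 * γ * η ^ 2 * (Lφ : ℝ) ^ 2) := by
      rw [hϑ]; exact (min_le_left _ _).trans (min_le_left _ _)
    rw [le_div_iff₀ (by positivity)] at h
    have := mul_le_mul_of_nonneg_left h (by positivity : 0 ≤ γ / 2)
    rw [hT]; linarith
  have hT2 : 2 * T * (γ ^ 2 * (Lφ:ℝ) ^ 2) ≤ γ * ϱ / 2 - 1 / (2 * α) := by
    have h : ϑ ≤ ((γ * α * ϱ - 1) / (4 * α * η ^ 2 *
          (‖A.comp At‖ + γ ^ 2 * (Lφ : ℝ) ^ 2))) := by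
      rw [hϑ]; exact (min_le_left _ _).trans (min_le_right _ _)
    have h0 : 0 ≤ ‖A.comp At‖ := norm_nonneg _
    rw [le_div_iff₀ (by positivity)] at h
    have h1 : 0 ≤ ϑ * (4 * α * η ^ 2) * ‖A.comp At‖ := by positivity
    have h2 : (2 * α) * (2 * T * (γ ^ 2 * (Lφ:ℝ) ^ 2)) ≤ (2 * α) * (γ * ϱ / 2 - 1 / (2 * α)) := by
      have e : (2 * α) * (γ * ϱ / 2 - 1 / (2 * α)) = γ * α * ϱ - 1 := by
        field_simp
      rw [e, hT]; linarith
    exact le_of_mul_le_mul_left h2 (by positivity)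
  have hT3 : T ≤ 1 / (4 * μ * Lψ) := by
    have h : ϑ ≤ ς / (4 * μ * η ^ 2 * (Lψ : ℝ) ^ 2) := by
      rw [hϑ]; exact min_le_right _ _
    rw [le_div_iff₀ (by positivity)] at h ⊢
    have h2 : (T * (4 * μ * Lψ)) * Lψ ≤ 1 * Lψ := by
      rw [hT]; linarith
    exact le_of_mul_le_mul_right h2 hLψpos
  refine ⟨hϑpos, fun k => ?_⟩
  -- optimality conditions
  obtain ⟨ξ, hξ, hξo⟩ := opt_cond f hf X hXcv ψ ψ' hψg (At (yt (k+1))) (x k) (x (k+1)) μ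
    (hxmem k) (fun z hz => by rw [← hAip, ← hAip]; exact hxmin k z hz)
  obtain ⟨ζ, hζ, hζo⟩ := opt_cond g hg Y hYcv φ φ' hφg (-A (x (k+1))) (y k) (y (k+1)) γ
    (hymem k) (fun z hz => by
      rw [inner_neg_left, inner_neg_left]; have := hymax k z hz; linarith)
  obtain ⟨ζt, hζt, hζto⟩ := opt_cond g hg Y hYcv φ φ' hφg (-A (x k)) (y k) (yt (k+1)) γ
    (hytmem k) (fun z hz => by
      rw [inner_neg_left, inner_neg_left]; have := hytmax k z hz; linarith)
  have herrk := herr k ξ hξ ζ hζ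
  have hr1 := proj_res X hXne hXcl hXcv (x (k+1)) (ξ + At (y (k+1))) _ (hxmem k) hξo
  have hr2 := proj_res Y hYne hYcl hYcv (y (k+1)) (ζ - A (x (k+1))) _ (hymem k) hζo
  set xp := x (k+1) with hxp
  set yp := y (k+1) with hyp
  set yy := yt (k+1) with hyy
  set r := μ • (ψ' xp - ψ' (x k)) - At (yp - yy) with hr
  have hr1' : ‖xp - projOn X (xp - (ξ + At yp))‖ ≤ ‖r‖ := by
    refine hr1.trans (le_of_eq ?_)
    rw [← norm_neg r, hr, map_sub]
    congr 1
    abel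
  have hr2' : ‖yp - projOn Y (yp - (ζ - A xp))‖ ≤ γ * (Lφ * ‖yp - y k‖) := by
    refine hr2.trans ?_
    have : ζ - A xp - (ζ + (-A xp + γ • (φ' yp - φ' (y k)))) = -(γ • (φ' yp - φ' (y k))) := by
      abel
    rw [this, norm_neg, norm_smul, Real.norm_of_nonneg hγ.le]
    gcongr
    exact hLipφ _ _
  have hsplit : ‖yp - y k‖ ^ 2 ≤ 2 * ‖yp - yy‖ ^ 2 + 2 * ‖yy - y k‖ ^ 2 := by
    have h1 : ‖yp - y k‖ ≤ ‖yp - yy‖ + ‖yy - y k‖ := norm_sub_le_norm_sub_add_norm_sub _ _ _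
    have h2 : ‖yp - y k‖ ^ 2 ≤ (‖yp - yy‖ + ‖yy - y k‖) ^ 2 := by gcongr
    nlinarith [sq_nonneg (‖yp - yy‖ - ‖yy - y k‖)]
  -- the gradient-step bound
  have hq : ‖r‖ ^ 2 / (4 * μ * Lψ) - 1 / (2 * α) * ‖yp - yy‖ ^ 2 ≤
      μ * Breg ψ ψ' xp (x k) - ⟪A (xp - x k), yp - yy⟫ := by
    set s : ℝ := 1 / (2 * μ * Lψ) with hs
    have hs0 : 0 < s := by positivity
    set z := xp - s • r with hz
    have h1 := hBψA z (x k)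
    have h2 : ⟪A (z - x k), yp - yy⟫ ≤ α / 2 * ‖A (z - x k)‖ ^ 2 + 1 / (2 * α) * ‖yp - yy‖ ^ 2 := by
      have h3 := real_inner_le_norm (A (z - x k)) (yp - yy)
      have h4 : 0 ≤ 1 / (2 * α) * (α * ‖A (z - x k)‖ - ‖yp - yy‖) ^ 2 := by positivity
      have e : 1 / (2 * α) * (α * ‖A (z - x k)‖ - ‖yp - yy‖) ^ 2 =
        α / 2 * ‖A (z - x k)‖ ^ 2 + 1 / (2 * α) * ‖yp - yy‖ ^ 2
          - ‖A (z - x k)‖ * ‖yp - yy‖ := by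
        field_simp
        ring
      linarith
    have h3 := hBup z xp
    have h4 : Breg ψ ψ' z (x k) = Breg ψ ψ' xp (x k) + Breg ψ ψ' z xp
        + ⟪ψ' xp - ψ' (x k), z - xp⟫ := by
      unfold Breg
      simp only [inner_sub_left, inner_sub_right]
      ring
    have h5 : ⟪A (z - x k), yp - yy⟫ = ⟪A (xp - x k), yp - yy⟫ + ⟪At (yp - yy), z - xp⟫ := by
      rw [hAip, hAip, ← inner_add_right]
      congr 1
      abel
    have h6 : μ * ⟪ψ' xp - ψ' (x k), z - xp⟫ - ⟪At (yp - yy), z - xp⟫ = - s * ‖r‖ ^ 2 := by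
      rw [← real_inner_smul_left, ← inner_sub_left, ← hr,
        show z - xp = -(s • r) by rw [hz]; abel, inner_neg_right, real_inner_smul_right,
        real_inner_self_eq_norm_sq]
      ring
    have h7 : ‖z - xp‖ ^ 2 = s ^ 2 * ‖r‖ ^ 2 := by
      rw [show z - xp = -(s • r) by rw [hz]; abel, norm_neg, norm_smul, mul_pow,
        Real.norm_of_nonneg hs0.le]
    rw [h7] at h3
    have h8 := mul_le_mul_of_nonneg_left h3 hμ.le
    have e : ‖r‖ ^ 2 / (4 * μ * Lψ) = s * ‖r‖ ^ 2 - μ * (Lψ * (s ^ 2 * ‖r‖ ^ 2)) := by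
      rw [hs]; field_simp; ring
    rw [h4] at h1
    rw [h5] at h2
    rw [e]
    linarith
  -- decrease
  have hdec : ∀ p ∈ Ustar, (γ * Breg φ φ' p.2 yp + μ * Breg ψ ψ' p.1 xp)
      + (γ * Breg φ φ' yp yy + γ * Breg φ φ' yy (y k) + (μ * Breg ψ ψ' xp (x k)
        - ⟪A (xp - x k), yp - yy⟫)) ≤ γ * Breg φ φ' p.2 (y k) + μ * Breg ψ ψ' p.1 (x k) := by
    intro p hp
    rw [hUstar] at hp
    obtain ⟨hp1, hp2, hp3⟩ := hp
    have hs1 := (hp3 xp (hxmem k) yy (hytmem k))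
    have t1 := three_pt f ψ ψ' _ _ _ ξ p.1 μ hξ (hξo _ hp1)
    have t2 := three_pt g φ φ' _ _ _ ζ p.2 γ hζ (hζo _ hp2)
    have t3 := three_pt g φ φ' _ _ _ ζt yp γ hζt (hζto _ (hymem k))
    obtain ⟨hs1, hs2⟩ := hs1
    unfold Lag at hs1 hs2
    rw [← hAip, ← hAip] at t1
    simp only [inner_neg_left] at t2 t3
    rw [map_sub]
    simp only [inner_sub_left, inner_sub_right]
    linarith
  have hbdd : BddBelow (Set.range fun p : Ustar => (γ * Breg φ φ' (p : Euc n × Euc m).2 yp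
        + μ * Breg ψ ψ' (p : Euc n × Euc m).1 xp)) := by
    refine ⟨0, ?_⟩
    rintro _ ⟨p, rfl⟩
    have h1 : 0 ≤ Breg φ φ' (p : Euc n × Euc m).2 yp := le_trans (by positivity) (hBφ _ _)
    have h2 : 0 ≤ Breg ψ ψ' (p : Euc n × Euc m).1 xp := le_trans (by positivity) (hBψ _ _)
    positivity
  have : Nonempty Ustar := hUne.to_subtype
  -- residual bound
  have hres : ϑ * dB (xp, yp) ≤ γ * Breg φ φ' yp yy + γ * Breg φ φ' yy (y k)
      + (μ * Breg ψ ψ' xp (x k) - ⟪A (xp - x k), yp - yy⟫) := by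
    have a1 : ‖xp - projOn X (xp - (ξ + At yp))‖ ^ 2 ≤ ‖r‖ ^ 2 := by gcongr
    have a2 : ‖yp - projOn Y (yp - (ζ - A xp))‖ ^ 2 ≤
        (γ ^ 2 * (Lφ:ℝ) ^ 2) * (2 * ‖yp - yy‖ ^ 2 + 2 * ‖yy - y k‖ ^ 2) := by
      calc _ ≤ (γ * (Lφ * ‖yp - y k‖)) ^ 2 := by gcongr
        _ = (γ ^ 2 * (Lφ:ℝ) ^ 2) * ‖yp - y k‖ ^ 2 := by ring
        _ ≤ _ := by gcongr
    have b1 : ϑ * dB (xp, yp) ≤ T * (‖r‖ ^ 2 +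
        (γ ^ 2 * (Lφ:ℝ) ^ 2) * (2 * ‖yp - yy‖ ^ 2 + 2 * ‖yy - y k‖ ^ 2)) := by
      calc _ ≤ ϑ * _ := mul_le_mul_of_nonneg_left herrk hϑpos.le
        _ = T * _ := by rw [hT, mul_assoc]
        _ ≤ _ := by gcongr
    have c1 : T * ‖r‖ ^ 2 ≤ ‖r‖ ^ 2 / (4 * μ * Lψ) := by
      calc _ ≤ 1 / (4 * μ * Lψ) * ‖r‖ ^ 2 := by gcongr
        _ = _ := by ring
    have c2 := mul_le_mul_of_nonneg_right hT2 (sq_nonneg ‖yp - yy‖)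
    have c3 := mul_le_mul_of_nonneg_right hT1 (sq_nonneg ‖yy - y k‖)
    have c4 := mul_le_mul_of_nonneg_left (hBφ yp yy) hγ.le
    have c5 := mul_le_mul_of_nonneg_left (hBφ yy (y k)) hγ.le
    linarith
  rw [hdB (x k, y k)]
  refine le_ciInf fun p => ?_
  have h1 := hdec p p.2
  have h2 : dB (xp, yp) ≤ γ * Breg φ φ' (p : Euc n × Euc m).2 yp
        + μ * Breg ψ ψ' (p : Euc n × Euc m).1 xp := by
    rw [hdB]
    exact ciInf_le hbdd p
  linarith
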